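/- (Increasing averaging for the relaxed primal-dual algorithm RPDA.) Fix q ≥ 0 and set w_t = t^q for t ≥ 1. Let τ, σ > 0 and ρ ∈ (0, 2) satisfy (1/τ − L_f/(2 − ρ))·(1/σ) ≥ ‖K‖², and let 0 < ρ_t ≤ ρ_{t+1} ≤ ρ for all t ≥ 0. Starting from z⁰ = (x⁰, y⁰) ∈ 𝕏 × 𝕐, for each t ≥ 0 let (ξ^{t+1}, η^{t+1}) = PD_{τ,σ}(x^t, y^t, 2ξ^{t+1} − x^t, y^t) and z^{t+1} = (x^{t+1}, y^{t+1}) = (1 − ρ_t)z^t + ρ_t(ξ^{t+1}, η^{t+1}). Set S_T = Σ_{t=1}^T w_t, x̄^T = (1/S_T) Σ_{t=1}^T w_t ξ^t and ȳ^T = (1/S_T) Σ_{t=1}^T w_t η^t. Then for every integer T ≥ 1, every (x, y) ∈ 𝕏 × 𝕐, and every Ω ∈ ℝ such that (1/2)‖(x, y) − z^t‖²_{M_{τ,σ}} ≤ Ω for all t ≥ 0, one has L(x̄^T, y) − L(x, ȳ^T) ≤ (q + 1)Ω / (ρ_0 T). -/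

import Mathlib

open scoped RealInnerProductSpace

lemma aux_three_point {E : Type*} [NormedAddCommGroup E] [InnerProductSpace ℝ E]
    (s : Set E) (φ : E → ℝ) (hφ : ConvexOn ℝ s φ) (c : ℝ) (a p : E) (hp : p ∈ s)
    (hmin : ∀ u ∈ s, φ p + c * ‖p - a‖ ^ 2 ≤ φ u + c * ‖u - a‖ ^ 2) (u : E) (hu : u ∈ s) :
    φ p + c * ‖p - a‖ ^ 2 + c * ‖u - p‖ ^ 2 ≤ φ u + c * ‖u - a‖ ^ 2 := by
  have key : ∀ r : ℝ, 0 < r → r ≤ 1 →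
      φ p + c * ‖p - a‖ ^ 2 + c * ‖u - p‖ ^ 2 - (φ u + c * ‖u - a‖ ^ 2)
        ≤ r * (c * ‖u - p‖ ^ 2) := by
    intro r hr hr1
    have h1 := hφ.2 hp hu (sub_nonneg.2 hr1) hr.le (by ring)
    have h2 := hmin _ (hφ.1 hp hu (sub_nonneg.2 hr1) hr.le (by ring))
    have h3 : ‖((1 - r) • p + r • u) - a‖ ^ 2 =
        (1 - r) * ‖p - a‖ ^ 2 + r * ‖u - a‖ ^ 2 - r * (1 - r) * ‖u - p‖ ^ 2 := by
      have e1 : ((1 - r) • p + r • u) - a = (1 - r) • (p - a) + r • (u - a) := by module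
      have e2 : u - p = (u - a) - (p - a) := by abel
      rw [e1, e2]
      generalize p - a = P
      generalize u - a = Q
      rw [norm_add_sq_real, norm_sub_sq_real, norm_smul, norm_smul, mul_pow, mul_pow,
        real_inner_smul_left, real_inner_smul_right, Real.norm_eq_abs, Real.norm_eq_abs,
        sq_abs, sq_abs, real_inner_comm]
      ring
    rw [h3] at h2
    simp only [smul_eq_mul] at h1
    have h4 : r * (φ p + c * ‖p - a‖ ^ 2 + c * ‖u - p‖ ^ 2 - (φ u + c * ‖u - a‖ ^ 2))
        ≤ r * (r * (c * ‖u - p‖ ^ 2)) := by nlinarith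
    exact le_of_mul_le_mul_left h4 hr
  generalize φ p + c * ‖p - a‖ ^ 2 + c * ‖u - p‖ ^ 2 = A at *
  generalize φ u + c * ‖u - a‖ ^ 2 = B at *
  generalize c * ‖u - p‖ ^ 2 = C at *
  by_contra! hlt
  have hD : 0 < A - B := by linarith
  have hC : 0 < C := by have := key 1 one_pos le_rfl; linarith
  have hr1 := key 1 one_pos le_rfl
  have := key ((A - B) / (2 * C)) (by positivity) (by rw [div_le_one (by positivity)]; linarith)
  have e : (A - B) / (2 * C) * C = (A - B) / 2 := by field_simp
  linarith

lemma aux_line {E : Type*} [NormedAddCommGroup E] [InnerProductSpace ℝ E]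
    (f : E → ℝ) (f' : E → E →L[ℝ] ℝ) (hfderiv : ∀ x, HasFDerivAt f (f' x) x) (a d : E) (s : ℝ) :
    HasDerivAt (fun s : ℝ => f (a + s • d)) (f' (a + s • d) d) s := by
  have h : HasDerivAt (fun s : ℝ => a + s • d) d s := by
    simpa using ((hasDerivAt_id s).smul_const d).const_add a
  exact (hfderiv (a + s • d)).comp_hasDerivAt s h

lemma aux_grad {E : Type*} [NormedAddCommGroup E] [InnerProductSpace ℝ E]
    (f : E → ℝ) (f' : E → E →L[ℝ] ℝ) (hf : ConvexOn ℝ Set.univ f)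
    (hfderiv : ∀ x, HasFDerivAt f (f' x) x) (a x : E) :
    f a + f' a (x - a) ≤ f x := by
  have h := aux_line f f' hfderiv a (x - a) 0
  have hc : ConvexOn ℝ Set.univ (fun s : ℝ => f (a + s • (x - a))) := by
    refine ⟨convex_univ, fun r _ s _ α β hα hβ hab => ?_⟩
    have := hf.2 (Set.mem_univ (a + r • (x - a))) (Set.mem_univ (a + s • (x - a))) hα hβ hab
    refine le_trans (le_of_eq ?_) this
    obtain rfl : α = 1 - β := by linarith
    refine congrArg f ?_
    simp only [smul_eq_mul]
    module
  have := hc.le_slope_of_hasDerivAt (Set.mem_univ 0) (Set.mem_univ 1) one_pos h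
  simp [slope_def_field] at this
  simp
  linarith

lemma aux_descent {E : Type*} [NormedAddCommGroup E] [InnerProductSpace ℝ E]
    (Lf : ℝ) (f : E → ℝ) (f' : E → E →L[ℝ] ℝ)
    (hfderiv : ∀ x, HasFDerivAt f (f' x) x)
    (hfLip : ∀ x x' : E, ‖f' x - f' x'‖ ≤ Lf * ‖x - x'‖) (a x : E) :
    f x ≤ f a + f' a (x - a) + Lf / 2 * ‖x - a‖ ^ 2 := by
  have h := aux_line f f' hfderiv a (x - a)
  set d := x - a with hd
  have hB : ∀ s : ℝ, HasDerivAt (fun s : ℝ => f a + s * f' a d + Lf / 2 * ‖d‖ ^ 2 * s ^ 2)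
      (f' a d + Lf / 2 * ‖d‖ ^ 2 * (2 * s)) s := by
    intro s
    have h1 := ((hasDerivAt_id s).mul_const (f' a d)).const_add (f a)
    have h2 := ((hasDerivAt_id s).pow 2).const_mul (Lf / 2 * ‖d‖ ^ 2)
    have h3 := h1.add h2
    refine HasDerivAt.congr_deriv h3 ?_
    simp
  have := image_le_of_deriv_right_le_deriv_boundary (a := 0) (b := 1)
    (f := fun s : ℝ => f (a + s • d)) (f' := fun s => f' (a + s • d) d)
    (B := fun s : ℝ => f a + s * f' a d + Lf / 2 * ‖d‖ ^ 2 * s ^ 2)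
    (B' := fun s => f' a d + Lf / 2 * ‖d‖ ^ 2 * (2 * s))
    (fun s _ => (h s).continuousAt.continuousWithinAt)
    (fun s _ => (h s).hasDerivWithinAt) (by simp)
    (fun s _ => (hB s).continuousAt.continuousWithinAt)
    (fun s _ => (hB s).hasDerivWithinAt) (by
      intro s hs
      have h1 := hfLip (a + s • d) a
      have h2 := (f' (a + s • d) - f' a).le_opNorm d
      have h3 := le_abs_self ((f' (a + s • d) - f' a) d)
      rw [← Real.norm_eq_abs] at h3
      have h4 : ‖a + s • d - a‖ = s * ‖d‖ := by
        rw [add_sub_cancel_left, norm_smul, Real.norm_of_nonneg hs.1]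
      rw [h4] at h1
      have h5 := mul_le_mul_of_nonneg_right h1 (norm_nonneg d)
      have h6 : (f' (a + s • d) - f' a) d = f' (a + s • d) d - f' a d := rfl
      rw [h6] at h2 h3
      linarith) (x := 1) (by simp)
  simp only [one_smul, one_mul, one_pow, mul_one] at this
  have e : a + d = x := by rw [hd]; abel
  rwa [e] at this

lemma aux_M_nonneg {X Y : Type*} [NormedAddCommGroup X] [InnerProductSpace ℝ X]
    [NormedAddCommGroup Y] [InnerProductSpace ℝ Y] (K : X →L[ℝ] Y) (c s : ℝ) (hs : 0 < s)
    (h : ‖K‖ ^ 2 ≤ c * s) (u : X) (v : Y) :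
    0 ≤ c / 2 * ‖u‖ ^ 2 + s / 2 * ‖v‖ ^ 2 - ⟪K u, v⟫ := by
  have h1 := real_inner_le_norm (K u) v
  have h2 := mul_le_mul_of_nonneg_right (K.le_opNorm u) (norm_nonneg v)
  have h3 : 0 ≤ s * (c * ‖u‖ ^ 2 + s * ‖v‖ ^ 2 - 2 * (‖K‖ * ‖u‖ * ‖v‖)) := by
    nlinarith [sq_nonneg (‖K‖ * ‖u‖ - s * ‖v‖), mul_le_mul_of_nonneg_right h (sq_nonneg ‖u‖)]
  have h4 := nonneg_of_mul_nonneg_right h3 hs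
  linarith

lemma aux_relax {X Y : Type*} [NormedAddCommGroup X] [InnerProductSpace ℝ X]
    [NormedAddCommGroup Y] [InnerProductSpace ℝ Y] (K : X →L[ℝ] Y) (α β r : ℝ)
    (x a ξ : X) (y b η : Y) :
    α * ‖x - ((1 - r) • a + r • ξ)‖ ^ 2 + β * ‖y - ((1 - r) • b + r • η)‖ ^ 2
        - ⟪K (x - ((1 - r) • a + r • ξ)), y - ((1 - r) • b + r • η)⟫ =
      (1 - r) * (α * ‖x - a‖ ^ 2 + β * ‖y - b‖ ^ 2 - ⟪K (x - a), y - b⟫)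
      + r * (α * ‖x - ξ‖ ^ 2 + β * ‖y - η‖ ^ 2 - ⟪K (x - ξ), y - η⟫)
      - r * (1 - r) * (α * ‖ξ - a‖ ^ 2 + β * ‖η - b‖ ^ 2 - ⟪K (ξ - a), η - b⟫) := by
  have e1 : x - ((1 - r) • a + r • ξ) = (1 - r) • (x - a) + r • (x - ξ) := by module
  have e2 : y - ((1 - r) • b + r • η) = (1 - r) • (y - b) + r • (y - η) := by module
  have e3 : ξ - a = (x - a) - (x - ξ) := by abel
  have e4 : η - b = (y - b) - (y - η) := by abel
  rw [e1, e2, e3, e4]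
  generalize x - a = P
  generalize x - ξ = Q
  generalize y - b = R
  generalize y - η = S
  simp only [norm_add_sq_real, norm_sub_sq_real, norm_smul, mul_pow, map_add, map_sub, map_smul,
    inner_add_left, inner_add_right, inner_sub_left, inner_sub_right,
    real_inner_smul_left, real_inner_smul_right, Real.norm_eq_abs, sq_abs]
  ring

lemma aux_alg {X Y : Type*} [NormedAddCommGroup X] [InnerProductSpace ℝ X]
    [NormedAddCommGroup Y] [InnerProductSpace ℝ Y] (K : X →L[ℝ] Y)
    (x a ξ : X) (y b η : Y) :
    ⟪K ξ, y⟫ - ⟪K x, η⟫ + ⟪K x, b⟫ - ⟪K ξ, b⟫ + ⟪K (2 • ξ - a), η⟫ - ⟪K (2 • ξ - a), y⟫ =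
      - ⟪K (x - a), y - b⟫ + ⟪K (x - ξ), y - η⟫ + ⟪K (ξ - a), η - b⟫ := by
  simp only [two_smul, map_add, map_sub, inner_add_left, inner_sub_left, inner_sub_right]
  ring

lemma aux_sum (q : ℝ) (hq : 0 ≤ q) (T : ℕ) :
    (T : ℝ) ^ (q + 1) ≤ (q + 1) * ∑ t ∈ Finset.Icc 1 T, (t : ℝ) ^ q := by
  induction T with
  | zero => simp [Real.zero_rpow (by linarith : q + 1 ≠ 0)]
  | succ n ih =>
    rw [Finset.sum_Icc_succ_top (by omega), mul_add]
    have hn : (0 : ℝ) < ((n + 1 : ℕ) : ℝ) := by positivity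
    set N : ℝ := ((n + 1 : ℕ) : ℝ) with hN
    have hnN : (n : ℝ) = N - 1 := by rw [hN]; push_cast; ring
    have h0 : (0 : ℝ) ≤ n := by positivity
    have hi : N⁻¹ ≤ 1 := inv_le_one_of_one_le₀ (by linarith)
    have hb := one_add_mul_self_le_rpow_one_add (s := - N⁻¹) (by linarith)
      (p := q + 1) (by linarith)
    have e1 : (1 + -N⁻¹) = n / N := by rw [hnN]; field_simp; ring
    rw [e1, Real.div_rpow h0 hn.le, le_div_iff₀ (by positivity)] at hb
    have e2 : N ^ (q + 1) = N ^ q * N := by rw [Real.rpow_add hn, Real.rpow_one]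
    have e3 : (1 + (q + 1) * -N⁻¹) * N ^ (q + 1) = N ^ (q + 1) - (q + 1) * N ^ q := by
      rw [e2]; field_simp; ring
    linarith

lemma aux_abel (w c A : ℕ → ℝ) (r Ω : ℝ) (hw : ∀ n, w n ≤ w (n + 1)) (hw0 : ∀ n, 0 ≤ w n)
    (hr : ∀ n, c n ≤ r) (hc : ∀ n, c (n + 1) ≤ c n)
    (hA : ∀ n, 0 ≤ A n) (hAΩ : ∀ n, A n ≤ Ω) (hcp : ∀ n, 0 ≤ c n) (n : ℕ) :
    ∑ t ∈ Finset.range (n + 1), w t * (c t * (A t - A (t + 1))) + w n * c n * A (n + 1)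
      ≤ w n * (r * Ω) := by
  have hcA : ∀ n m, c n * A m ≤ r * Ω := fun n m =>
    mul_le_mul (hr n) (hAΩ m) (hA m) ((hcp n).trans (hr n))
  induction n with
  | zero =>
    simp
    have := mul_le_mul_of_nonneg_left (hcA 0 0) (hw0 0)
    linarith
  | succ n ih =>
    rw [Finset.sum_range_succ]
    have h1 := mul_le_mul_of_nonneg_left (hcA (n + 1) (n + 1)) (sub_nonneg.2 (hw n))
    have h2 := mul_le_mul_of_nonneg_left (mul_le_mul_of_nonneg_right (hc n) (hA (n + 1))) (hw0 n)
    linarith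


/-- Increasing iterate averaging for the relaxed primal-dual algorithm (RPDA):
with weights `w_t = t^q`, the weighted averages of the inner iterates `(ξ^t, η^t)`
satisfy a `(q+1)Ω/(ρ₀T)` bound on the pointwise saddle-point gap, where `Ω` bounds
`(1/2)‖(x,y) - z^t‖²_{M_{τ,σ}}` along the iterates. -/
theorem stmt_2
    {X Y : Type*} [NormedAddCommGroup X] [InnerProductSpace ℝ X] [FiniteDimensional ℝ X]
    [NormedAddCommGroup Y] [InnerProductSpace ℝ Y] [FiniteDimensional ℝ Y]
    (K : X →L[ℝ] Y)
    (Lf : ℝ) (hLf : 0 ≤ Lf)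
    (f : X → ℝ) (f' : X → X →L[ℝ] ℝ)
    (hfconv : ConvexOn ℝ Set.univ f)
    (hfderiv : ∀ x, HasFDerivAt f (f' x) x)
    (hfLip : ∀ x x' : X, ‖f' x - f' x'‖ ≤ Lf * ‖x - x'‖)
    (domg : Set X) (hdomgne : domg.Nonempty) (hdomgconv : Convex ℝ domg)
    (g : X → ℝ) (hgconv : ConvexOn ℝ domg g) (hglsc : LowerSemicontinuousOn g domg)
    (domh : Set Y) (hdomhne : domh.Nonempty) (hdomhconv : Convex ℝ domh)
    (hstar : Y → ℝ) (hhconv : ConvexOn ℝ domh hstar)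
    (hhlsc : LowerSemicontinuousOn hstar domh)
    (L : X → Y → ℝ) (hLdef : ∀ x y, L x y = ⟪K x, y⟫ + f x + g x - hstar y)
    -- weight exponent
    (q : ℝ) (hq : 0 ≤ q)
    -- stepsizes and relaxation parameters
    (τ σ ρ : ℝ) (hτ : 0 < τ) (hσ : 0 < σ) (hρ0 : 0 < ρ) (hρ2 : ρ < 2)
    (hstep : ‖K‖ ^ 2 ≤ (1 / τ - Lf / (2 - ρ)) * (1 / σ))
    (ρs : ℕ → ℝ) (hρspos : ∀ t, 0 < ρs t) (hρsmono : ∀ t, ρs t ≤ ρs (t + 1))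
    (hρsle : ∀ t, ρs t ≤ ρ)
    -- the RPDA iterates: (ξ^{t+1}, η^{t+1}) = PD_{τ,σ}(x^t, y^t, 2ξ^{t+1} - x^t, y^t),
    -- z^{t+1} = (1 - ρ_t) z^t + ρ_t (ξ^{t+1}, η^{t+1})
    (xs : ℕ → X) (ys : ℕ → Y) (ξ : ℕ → X) (η : ℕ → Y)
    (hξ : ∀ t : ℕ, ξ (t + 1) ∈ domg ∧ ∀ u ∈ domg,
      f (xs t) + f' (xs t) (ξ (t + 1) - xs t) + g (ξ (t + 1)) + ⟪K (ξ (t + 1)), ys t⟫ +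
          1 / τ * (1 / 2 * ‖ξ (t + 1) - xs t‖ ^ 2) ≤
        f (xs t) + f' (xs t) (u - xs t) + g u + ⟪K u, ys t⟫ +
          1 / τ * (1 / 2 * ‖u - xs t‖ ^ 2))
    (hη : ∀ t : ℕ, η (t + 1) ∈ domh ∧ ∀ v ∈ domh,
      hstar (η (t + 1)) - ⟪K (2 • ξ (t + 1) - xs t), η (t + 1)⟫ +
          1 / σ * (1 / 2 * ‖η (t + 1) - ys t‖ ^ 2) ≤
        hstar v - ⟪K (2 • ξ (t + 1) - xs t), v⟫ + 1 / σ * (1 / 2 * ‖v - ys t‖ ^ 2))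
    (hxrelax : ∀ t : ℕ, xs (t + 1) = (1 - ρs t) • xs t + ρs t • ξ (t + 1))
    (hyrelax : ∀ t : ℕ, ys (t + 1) = (1 - ρs t) • ys t + ρs t • η (t + 1)) :
    ∀ T : ℕ, 1 ≤ T → ∀ x ∈ domg, ∀ y ∈ domh, ∀ Ω : ℝ,
      (∀ t : ℕ,
        1 / (2 * τ) * ‖x - xs t‖ ^ 2 + 1 / (2 * σ) * ‖y - ys t‖ ^ 2 -
            ⟪K (x - xs t), y - ys t⟫ ≤ Ω) →
      L ((1 / ∑ t ∈ Finset.Icc 1 T, (t : ℝ) ^ q) •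
            ∑ t ∈ Finset.Icc 1 T, ((t : ℝ) ^ q) • ξ t) y -
          L x ((1 / ∑ t ∈ Finset.Icc 1 T, (t : ℝ) ^ q) •
            ∑ t ∈ Finset.Icc 1 T, ((t : ℝ) ^ q) • η t) ≤
        (q + 1) * Ω / (ρs 0 * (T : ℝ)) := by
  intro T hT x hx y hy Ω hΩ
  have hs : 0 < 1 / σ := by positivity
  have h2ρ : 0 < 2 - ρ := by linarith
  set A : ℕ → ℝ := fun t => 1 / (2 * τ) * ‖x - xs t‖ ^ 2 + 1 / (2 * σ) * ‖y - ys t‖ ^ 2 -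
            ⟪K (x - xs t), y - ys t⟫ with hAdef
  have hM : ∀ (u : X) (v : Y), Lf / (2 - ρ) / 2 * ‖u‖ ^ 2 ≤
      1 / (2 * τ) * ‖u‖ ^ 2 + 1 / (2 * σ) * ‖v‖ ^ 2 - ⟪K u, v⟫ := by
    intro u v
    have := aux_M_nonneg K _ _ hs hstep u v
    have e1 : 1 / (2 * τ) = 1 / τ / 2 := by field_simp
    have e2 : 1 / (2 * σ) = 1 / σ / 2 := by field_simp
    rw [e1, e2]
    linarith
  have hM0 : ∀ (u : X) (v : Y), 0 ≤
      1 / (2 * τ) * ‖u‖ ^ 2 + 1 / (2 * σ) * ‖v‖ ^ 2 - ⟪K u, v⟫ := fun u v =>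
    le_trans (by positivity) (hM u v)
  have hA0 : ∀ t, 0 ≤ A t := fun t => hM0 _ _
  have hΩ0 : 0 ≤ Ω := (hA0 0).trans (hΩ 0)
  -- one step
  have step : ∀ t, (⟪K (ξ (t + 1)), y⟫ + f (ξ (t + 1)) + g (ξ (t + 1)) - hstar y) -
      (⟪K x, η (t + 1)⟫ + f x + g x - hstar (η (t + 1))) ≤ 1 / ρs t * (A t - A (t + 1)) := by
    intro t
    have hp := aux_three_point domg (fun u => f' (xs t) (u - xs t) + g u + ⟪K u, ys t⟫)
      (by
        refine ⟨hdomgconv, fun u hu v hv α β hα hβ hab => ?_⟩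
        have := hgconv.2 hu hv hα hβ hab
        obtain rfl : α = 1 - β := by linarith
        simp only [map_add, map_sub, map_smul, smul_eq_mul, inner_add_left,
          real_inner_smul_left] at this ⊢
        linarith) (1 / (2 * τ)) (xs t) (ξ (t + 1)) (hξ t).1
      (by
        intro u hu
        have := (hξ t).2 u hu
        have e1 : 1 / (2 * τ) = 1 / τ * (1 / 2) := by field_simp
        rw [e1]
        linarith) x hx
    have hd := aux_three_point domh (fun v => hstar v - ⟪K (2 • ξ (t + 1) - xs t), v⟫)
      (by
        refine ⟨hdomhconv, fun u hu v hv α β hα hβ hab => ?_⟩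
        have := hhconv.2 hu hv hα hβ hab
        simp only [smul_eq_mul, inner_add_right, real_inner_smul_right] at this ⊢
        linarith) (1 / (2 * σ)) (ys t) (η (t + 1)) (hη t).1
      (by
        intro u hu
        have := (hη t).2 u hu
        have e1 : 1 / (2 * σ) = 1 / σ * (1 / 2) := by field_simp
        rw [e1]
        linarith) y hy
    have hg1 := aux_grad f f' hfconv hfderiv (xs t) x
    have hg2 := aux_descent Lf f f' hfderiv hfLip (xs t) (ξ (t + 1))
    have hal := aux_alg K x (xs t) (ξ (t + 1)) y (ys t) (η (t + 1))
    have hre := aux_relax K (1 / (2 * τ)) (1 / (2 * σ)) (ρs t) x (xs t) (ξ (t + 1)) y (ys t)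
      (η (t + 1))
    rw [← hxrelax, ← hyrelax] at hre
    have hMt := hM (ξ (t + 1) - xs t) (η (t + 1) - ys t)
    have hMt0 := hM0 (ξ (t + 1) - xs t) (η (t + 1) - ys t)
    have hr := hρspos t
    have hLM : Lf / 2 * ‖ξ (t + 1) - xs t‖ ^ 2 ≤ (2 - ρs t) *
        (1 / (2 * τ) * ‖ξ (t + 1) - xs t‖ ^ 2 + 1 / (2 * σ) * ‖η (t + 1) - ys t‖ ^ 2
          - ⟪K (ξ (t + 1) - xs t), η (t + 1) - ys t⟫) := by
      refine le_trans ?_ (mul_le_mul_of_nonneg_right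
        (by linarith [hρsle t] : 2 - ρ ≤ 2 - ρs t) hMt0)
      refine le_trans (le_of_eq ?_) (mul_le_mul_of_nonneg_left hMt h2ρ.le)
      field_simp
    rw [one_div_mul_eq_div, le_div_iff₀ hr]
    have hgap : (⟪K (ξ (t + 1)), y⟫ + f (ξ (t + 1)) + g (ξ (t + 1)) - hstar y) -
      (⟪K x, η (t + 1)⟫ + f x + g x - hstar (η (t + 1))) ≤
        (1 / (2 * τ) * ‖x - xs t‖ ^ 2 + 1 / (2 * σ) * ‖y - ys t‖ ^ 2
          - ⟪K (x - xs t), y - ys t⟫)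
        - (1 / (2 * τ) * ‖x - ξ (t + 1)‖ ^ 2 + 1 / (2 * σ) * ‖y - η (t + 1)‖ ^ 2
          - ⟪K (x - ξ (t + 1)), y - η (t + 1)⟫)
        + (1 - ρs t) * (1 / (2 * τ) * ‖ξ (t + 1) - xs t‖ ^ 2
          + 1 / (2 * σ) * ‖η (t + 1) - ys t‖ ^ 2
          - ⟪K (ξ (t + 1) - xs t), η (t + 1) - ys t⟫) := by
      linarith
    have := mul_le_mul_of_nonneg_right hgap hr.le
    simp only [hAdef]
    rw [hre]
    linarith
  -- summation
  obtain ⟨n, rfl⟩ : ∃ n, T = n + 1 := ⟨T - 1, by omega⟩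
  set S : ℝ := ∑ t ∈ Finset.Icc 1 (n + 1), (t : ℝ) ^ q with hS
  have hmono : Monotone ρs := monotone_nat_of_le_succ hρsmono
  have hab := aux_abel (fun t => ((t + 1 : ℕ) : ℝ) ^ q) (fun t => 1 / ρs t) A (1 / ρs 0) Ω
    (fun m => Real.rpow_le_rpow (by positivity) (by push_cast; linarith) hq)
    (fun m => by positivity)
    (fun m => one_div_le_one_div_of_le (hρspos 0) (hmono (Nat.zero_le m)))
    (fun m => one_div_le_one_div_of_le (hρspos m) (hρsmono m))
    hA0 hΩ (fun m => (one_div_pos.2 (hρspos m)).le) n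
  have hSpos : 0 < S := Finset.sum_pos
    (fun t ht => Real.rpow_pos_of_pos (by
      have := (Finset.mem_Icc.1 ht).1
      exact_mod_cast this) q) ⟨1, by simp⟩
  have hsum := aux_sum q hq (n + 1)
  rw [← hS] at hsum
  set W : ℕ → ℝ := fun t => 1 / S * (t : ℝ) ^ q with hW
  have hW0 : ∀ t ∈ Finset.Icc 1 (n + 1), 0 ≤ W t := fun t _ => by positivity
  have hW1 : ∑ t ∈ Finset.Icc 1 (n + 1), W t = 1 := by
    rw [hW, ← Finset.mul_sum, ← hS, one_div_mul_cancel hSpos.ne']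
  have hξm : ∀ t ∈ Finset.Icc 1 (n + 1), ξ t ∈ domg := by
    intro t ht
    obtain ⟨m, rfl⟩ : ∃ m, t = m + 1 := ⟨t - 1, by have := (Finset.mem_Icc.1 ht).1; omega⟩
    exact (hξ m).1
  have hηm : ∀ t ∈ Finset.Icc 1 (n + 1), η t ∈ domh := by
    intro t ht
    obtain ⟨m, rfl⟩ : ∃ m, t = m + 1 := ⟨t - 1, by have := (Finset.mem_Icc.1 ht).1; omega⟩
    exact (hη m).1
  have ex : (1 / S) • ∑ t ∈ Finset.Icc 1 (n + 1), ((t : ℝ) ^ q) • ξ t =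
      ∑ t ∈ Finset.Icc 1 (n + 1), W t • ξ t := by
    rw [Finset.smul_sum]; simp only [smul_smul, hW]
  have ey : (1 / S) • ∑ t ∈ Finset.Icc 1 (n + 1), ((t : ℝ) ^ q) • η t =
      ∑ t ∈ Finset.Icc 1 (n + 1), W t • η t := by
    rw [Finset.smul_sum]; simp only [smul_smul, hW]
  rw [ex, ey, hLdef, hLdef]
  have jf := hfconv.map_sum_le hW0 hW1 (p := ξ) (fun _ _ => Set.mem_univ _)
  have jg := hgconv.map_sum_le hW0 hW1 hξm
  have jh := hhconv.map_sum_le hW0 hW1 hηm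
  have k1 : ⟪K (∑ t ∈ Finset.Icc 1 (n + 1), W t • ξ t), y⟫ =
      ∑ t ∈ Finset.Icc 1 (n + 1), W t * ⟪K (ξ t), y⟫ := by
    simp only [map_sum, map_smul, sum_inner, real_inner_smul_left]
  have k2 : ⟪K x, ∑ t ∈ Finset.Icc 1 (n + 1), W t • η t⟫ =
      ∑ t ∈ Finset.Icc 1 (n + 1), W t * ⟪K x, η t⟫ := by
    simp only [inner_sum, real_inner_smul_right]
  have hle : ∑ t ∈ Finset.Icc 1 (n + 1), W t * ((⟪K (ξ t), y⟫ + f (ξ t) + g (ξ t) - hstar y) -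
      (⟪K x, η t⟫ + f x + g x - hstar (η t))) ≤ 1 / S * (((n + 1 : ℕ) : ℝ) ^ q * (1 / ρs 0 * Ω)) := by
    have e : ∀ F : ℕ → ℝ, ∑ t ∈ Finset.Icc 1 (n + 1), F t =
        ∑ t ∈ Finset.range (n + 1), F (t + 1) := by
      intro F
      rw [Finset.range_eq_Ico, Finset.sum_Ico_add' F 0 (n + 1) 1]
      rfl
    rw [e]
    simp only [hW, mul_assoc]
    rw [← Finset.mul_sum]
    refine mul_le_mul_of_nonneg_left ?_ (by positivity)
    refine le_trans (Finset.sum_le_sum (fun t _ => mul_le_mul_of_nonneg_left (step t)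
      (by positivity))) ?_
    have hlast : 0 ≤ ((n + 1 : ℕ) : ℝ) ^ q * (1 / ρs n) * A (n + 1) :=
      mul_nonneg (mul_nonneg (by positivity) (one_div_pos.2 (hρspos n)).le) (hA0 _)
    linarith
  have hsplit : ∑ t ∈ Finset.Icc 1 (n + 1), W t * ((⟪K (ξ t), y⟫ + f (ξ t) + g (ξ t) - hstar y) -
      (⟪K x, η t⟫ + f x + g x - hstar (η t))) =
      ∑ t ∈ Finset.Icc 1 (n + 1), W t * ⟪K (ξ t), y⟫ + ∑ t ∈ Finset.Icc 1 (n + 1), W t * f (ξ t)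
      + ∑ t ∈ Finset.Icc 1 (n + 1), W t * g (ξ t) - hstar y
      - (∑ t ∈ Finset.Icc 1 (n + 1), W t * ⟪K x, η t⟫ + f x + g x
        - ∑ t ∈ Finset.Icc 1 (n + 1), W t * hstar (η t)) := by
    simp only [mul_sub, mul_add, Finset.sum_sub_distrib, Finset.sum_add_distrib,
      ← Finset.sum_mul, hW1, one_mul]
  simp only [smul_eq_mul] at jf jg jh
  have hfin : 1 / S * (((n + 1 : ℕ) : ℝ) ^ q * (1 / ρs 0 * Ω)) ≤
      (q + 1) * Ω / (ρs 0 * ((n + 1 : ℕ) : ℝ)) := by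
    have hn : (0 : ℝ) < ((n + 1 : ℕ) : ℝ) := by positivity
    have hr := hρspos 0
    rw [Real.rpow_add hn, Real.rpow_one] at hsum
    generalize ((n + 1 : ℕ) : ℝ) ^ q = V at *
    generalize ((n + 1 : ℕ) : ℝ) = N at *
    have : 1 / S * (V * (1 / ρs 0 * Ω)) = V * Ω / (S * ρs 0) := by field_simp
    rw [this, div_le_div_iff₀ (by positivity) (by positivity)]
    have := mul_le_mul_of_nonneg_right hsum (mul_nonneg hΩ0 hr.le)
    linarith
  rw [k1, k2]
  linarith
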